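/- Suppose L is a metric flag labeled triangulation of the 2-sphere. Then no two 3-Euclidean vertices of L are joined by an edge of L; consequently, the closed stars of two distinct 3-Euclidean vertices have no 2-simplex of L in common. -/

import Mathlib

open Geometry

/-- The ambient space for our simplicial complexes. -/
abbrev E3 : Type := EuclideanSpace ℝ (Fin 3)

noncomputable instance : DecidableEq E3 := Classical.decEq _

namespace CoxOrb

variable (L : SimplicialComplex ℝ E3) (m : E3 → E3 → ℕ)

/-- `L` is a labeled triangulation of the 2-sphere with edge labeling `m`:
`L` is finite, its underlying space is homeomorphic to the 2-sphere, and `m`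
is symmetric with `m s t ≥ 2` on every edge `{s, t}` of `L`. -/
structure IsLabeledS2 : Prop where
  finite : L.faces.Finite
  sphere : Nonempty (L.space ≃ₜ (Metric.sphere (0 : E3) 1 : Set E3))
  symm : ∀ s t : E3, m s t = m t s
  two_le : ∀ s t : E3, s ≠ t → ({s, t} : Finset E3) ∈ L.faces → 2 ≤ m s t

/-- `L` with labeling `m` is metric flag: three pairwise-joined vertices span a
2-simplex iff the corresponding angle sum `π/m_st + π/m_tu + π/m_us` exceeds `π`. -/
def MetricFlag : Prop :=
  ∀ s t u : E3, s ≠ t → t ≠ u → s ≠ u →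
    ({s, t} : Finset E3) ∈ L.faces → ({t, u} : Finset E3) ∈ L.faces →
    ({s, u} : Finset E3) ∈ L.faces →
    (({s, t, u} : Finset E3) ∈ L.faces ↔
      1 / (m s t : ℝ) + 1 / (m t u : ℝ) + 1 / (m u s : ℝ) > 1)

/-- The link of a vertex `s`, as a set of faces of `L`. -/
def link (s : E3) : Set (Finset E3) :=
  {F | F ∈ L.faces ∧ s ∉ F ∧ insert s F ∈ L.faces}

/-- The closed star of a vertex `s`: all faces of `L` contained in some face
containing `s`. -/
def star (s : E3) : Set (Finset E3) :=
  {F | F ∈ L.faces ∧ ∃ G ∈ L.faces, s ∈ G ∧ F ⊆ G}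

/-- The vertices of the link of `s`. -/
def linkVerts (s : E3) : Set E3 :=
  {v | v ≠ s ∧ ({s, v} : Finset E3) ∈ L.faces}

/-- A set of faces `A` is a full subcomplex of `L`: every face of `L` all of
whose vertices are vertices of `A` belongs to `A`. -/
def IsFullSubcomplex (A : Set (Finset E3)) : Prop :=
  A ⊆ L.faces ∧ ∀ F ∈ L.faces, (∀ v ∈ F, ({v} : Finset E3) ∈ A) → F ∈ A

/-- `s` is a 3-Euclidean vertex of `L`: it has valence three and the labels on
the three edges of its link have reciprocals summing to one. -/
def IsThreeEuclidean (s : E3) : Prop :=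
  ({s} : Finset E3) ∈ L.faces ∧
  ∃ s₀ s₁ s₂ : E3, s₀ ≠ s₁ ∧ s₁ ≠ s₂ ∧ s₀ ≠ s₂ ∧
    linkVerts L s = {s₀, s₁, s₂} ∧
    1 / (m s₀ s₁ : ℝ) + 1 / (m s₁ s₂ : ℝ) + 1 / (m s₂ s₀ : ℝ) = 1

/-- `s` is a 4-Euclidean vertex of `L`: it has valence four, its link is the
4-circuit on `v 0, v 1, v 2, v 3` (in cyclic order), and the labels on the
edges of the link are all `2`. -/
def IsFourEuclidean (s : E3) : Prop :=
  ({s} : Finset E3) ∈ L.faces ∧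
  ∃ v : Fin 4 → E3, Function.Injective v ∧
    linkVerts L s = {v 0, v 1, v 2, v 3} ∧
    (∀ i : Fin 4, ({s, v i, v (i + 1)} : Finset E3) ∈ L.faces) ∧
    (∀ i : Fin 4, m (v i) (v (i + 1)) = 2)

/-- `L` is the boundary complex of a 3-simplex: four pairwise-joined vertices
spanning four 2-simplices. -/
def IsBoundaryOfThreeSimplex : Prop :=
  ∃ a b c d : E3, a ≠ b ∧ a ≠ c ∧ a ≠ d ∧ b ≠ c ∧ b ≠ d ∧ c ≠ d ∧
    (∀ v : E3, ({v} : Finset E3) ∈ L.faces ↔ v = a ∨ v = b ∨ v = c ∨ v = d) ∧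
    ({a, b, c} : Finset E3) ∈ L.faces ∧ ({a, b, d} : Finset E3) ∈ L.faces ∧
    ({a, c, d} : Finset E3) ∈ L.faces ∧ ({b, c, d} : Finset E3) ∈ L.faces

/-- `L` is the suspension of a 3-gon. -/
def IsSuspensionOfThreeGon : Prop :=
  ∃ t t' s₀ s₁ s₂ : E3, [t, t', s₀, s₁, s₂].Pairwise (· ≠ ·) ∧
    (∀ v : E3, ({v} : Finset E3) ∈ L.faces ↔ v = t ∨ v = t' ∨ v = s₀ ∨ v = s₁ ∨ v = s₂) ∧
    ({s₀, s₁} : Finset E3) ∈ L.faces ∧ ({s₁, s₂} : Finset E3) ∈ L.faces ∧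
    ({s₀, s₂} : Finset E3) ∈ L.faces ∧
    ({t, s₀} : Finset E3) ∈ L.faces ∧ ({t, s₁} : Finset E3) ∈ L.faces ∧
    ({t, s₂} : Finset E3) ∈ L.faces ∧
    ({t', s₀} : Finset E3) ∈ L.faces ∧ ({t', s₁} : Finset E3) ∈ L.faces ∧
    ({t', s₂} : Finset E3) ∈ L.faces ∧
    ({t, t'} : Finset E3) ∉ L.faces

/-- The simplicial join of the subcomplex `Z` with the two points `t, t'`. -/
def joinSusp (Z : Set (Finset E3)) (t t' : E3) : Set (Finset E3) :=
  Z ∪ {{t}, {t'}} ∪ ((fun F => insert t F) '' Z) ∪ ((fun F => insert t' F) '' Z)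

/-- `T` is the right-angled suspension in `L` of the subcomplex `Z` with
suspension points `t, t'` (not joined by an edge of `T`): every edge from a
suspension point to a vertex of `Z` is labeled `2`. -/
structure IsRASuspData (T Z : Set (Finset E3)) (t t' : E3) : Prop where
  subset : T ⊆ L.faces
  zsubset : Z ⊆ L.faces
  zdown : ∀ F ∈ Z, ∀ G : Finset E3, G ⊆ F → G.Nonempty → G ∈ Z
  znonempty : Z.Nonempty
  tne : t ≠ t'
  t_notin : ∀ F ∈ Z, t ∉ F
  t'_notin : ∀ F ∈ Z, t' ∉ F
  labels : ∀ v : E3, ({v} : Finset E3) ∈ Z → m t v = 2 ∧ m t' v = 2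
  eq : T = joinSusp Z t t'

/-- `T` is a right-angled suspension in `L`. -/
def IsRASusp (T : Set (Finset E3)) : Prop :=
  ∃ Z t t', IsRASuspData L m T Z t t'

/-- The base `Z` of the suspension is neither a single vertex nor a single
edge, so that the suspension is infinite. -/
def InfiniteBase (Z : Set (Finset E3)) : Prop :=
  (¬ ∃ v : E3, Z = {({v} : Finset E3)}) ∧
  (¬ ∃ u v : E3, u ≠ v ∧ Z = {({u} : Finset E3), ({v} : Finset E3), ({u, v} : Finset E3)})

/-- `T` is an infinite, maximal right-angled suspension in `L`: it is an
RA-suspension of a full subcomplex which is neither a vertex nor an edge, and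
`T` is not properly contained in another RA-suspension. -/
def IsInfMaxRASusp (T : Set (Finset E3)) : Prop :=
  (∃ Z t t', IsRASuspData L m T Z t t' ∧ InfiniteBase Z ∧ IsFullSubcomplex L Z) ∧
  ∀ T', IsRASusp L m T' → T ⊆ T' → T = T'

/-- `v 0, v 1, v 2, v 3` (in cyclic order) form a Euclidean 4-circuit of `L`:
all four edge labels are `2` and the circuit is not the boundary of the union
of two 2-simplices of `L` sharing an edge. -/
def IsEuclidean4Circuit (v : Fin 4 → E3) : Prop :=
  Function.Injective v ∧
  (∀ i : Fin 4, ({v i, v (i + 1)} : Finset E3) ∈ L.faces) ∧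
  (∀ i : Fin 4, m (v i) (v (i + 1)) = 2) ∧
  ¬ ((({v 0, v 1, v 2} : Finset E3) ∈ L.faces ∧ ({v 0, v 2, v 3} : Finset E3) ∈ L.faces) ∨
     (({v 1, v 2, v 3} : Finset E3) ∈ L.faces ∧ ({v 0, v 1, v 3} : Finset E3) ∈ L.faces))

/-- The subcomplex consisting of the vertices and edges of the 4-circuit `v`. -/
def circuitComplex (v : Fin 4 → E3) : Set (Finset E3) :=
  {F | (∃ i : Fin 4, F = {v i}) ∨ (∃ i : Fin 4, F = {v i, v (i + 1)})}

/-- `T` is the right-angled cone on a Euclidean 4-circuit: the closed star of a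
vertex `c` of valence four whose link is a Euclidean 4-circuit, all four edges
containing `c` being labeled `2`. -/
def IsRAConeOn4Circuit (T : Set (Finset E3)) : Prop :=
  ∃ (c : E3) (v : Fin 4 → E3), IsEuclidean4Circuit L m v ∧
    linkVerts L c = {v 0, v 1, v 2, v 3} ∧
    (∀ i : Fin 4, ({c, v i, v (i + 1)} : Finset E3) ∈ L.faces) ∧
    (∀ i : Fin 4, m c (v i) = 2) ∧
    T = star L c

/-- The generating relation for Seifert subcomplexes: two infinite, maximal
RA-suspensions whose intersection is a Euclidean 4-circuit. -/
def SeifertRel (S S' : Set (Finset E3)) : Prop :=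
  IsInfMaxRASusp L m S ∧ IsInfMaxRASusp L m S' ∧
  ∃ v : Fin 4 → E3, IsEuclidean4Circuit L m v ∧ S ∩ S' = circuitComplex v

/-- `D` is a Seifert subcomplex of `L`: the union of the members of an
equivalence class of infinite, maximal RA-suspensions under the equivalence
relation generated by `SeifertRel`. -/
def IsSeifertSubcomplex (D : Set (Finset E3)) : Prop :=
  ∃ S₀, IsInfMaxRASusp L m S₀ ∧
    D = ⋃₀ {S | IsInfMaxRASusp L m S ∧ Relation.EqvGen (SeifertRel L m) S₀ S}

end CoxOrb

open CoxOrb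

/-!
The star of a 3-Euclidean vertex `s` is the full cone on its three neighbours `a`, `b`, `c`: if
`{s, a, b}` were not a face, then every face at `s` would lie in one of three faces glued in a path,
`{s, a}` or `{s, a, c}`, then `{s, c}`, then `{s, b}` or `{s, b, c}`. The simplices of these faces
remain convex after removing `s` and meet along convex sets, so logarithms can be chosen on each and
adjusted by constants to agree. Hence every nowhere zero function on the punctured star would have
a logarithm, whereas a complex chart of the surface centred at `s` has none.

If two 3-Euclidean vertices `s`, `s'` are adjacent, let `a` and `b` be the other neighbours of `s`.
The cone at `s` makes them neighbours of `s'`, so the cone at `s'` contains the face `{s', a, b}`.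
Its angle sum is exactly `π`, since `s` is 3-Euclidean, but the angle sum of a face exceeds `π`.
-/

open Set Topology

section Logarithms

variable {X : Type*} [TopologicalSpace X] {A : Set X}

/-- `A` has logarithms if every continuous nowhere zero complex function on `A` has a continuous
logarithm on `A`. This is the invariant that tells the puncture of a surface from a disc. -/
def HasLogs (A : Set X) : Prop :=
  ∀ f : X → ℂ, ContinuousOn f A → (∀ x ∈ A, f x ≠ 0) →
    ∃ g : X → ℂ, ContinuousOn g A ∧ ∀ x ∈ A, Complex.exp (g x) = f x

theorem exists_continuousOn_extension {Y : Type*} [TopologicalSpace Y] [Nonempty Y] (f : C(A, Y)) :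
    ∃ F : X → Y, ContinuousOn F A ∧ ∀ x : A, F x = f x := by
  have hF : ∀ x : A, Function.extend (↑) f (fun _ ↦ Classical.arbitrary Y) (x : X) = f x :=
    Subtype.val_injective.extend_apply f _
  refine ⟨_, ?_, hF⟩
  rw [continuousOn_iff_continuous_domRestrict]
  exact f.continuous.congr fun x ↦ (hF x).symm

theorem hasLogs_iff_continuousMap :
    HasLogs A ↔ ∀ f : C(A, ℂ), (∀ x, f x ≠ 0) → ∃ g : C(A, ℂ), ∀ x, Complex.exp (g x) = f x := by
  constructor
  · intro hA f hf
    obtain ⟨F, hF, hFf⟩ := exists_continuousOn_extension f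
    obtain ⟨g, hg, hgF⟩ := hA F hF fun x hx ↦ (hFf ⟨x, hx⟩).trans_ne (hf _)
    exact ⟨⟨_, hg.domRestrict⟩, fun x ↦ (hgF x x.2).trans (hFf x)⟩
  · intro hA f hf hf0
    obtain ⟨g, hgf⟩ := hA ⟨_, hf.domRestrict⟩ fun x ↦ hf0 x x.2
    obtain ⟨G, hG, hGg⟩ := exists_continuousOn_extension g
    exact ⟨G, hG, fun x hx ↦ (congrArg _ (hGg ⟨x, hx⟩)).trans (hgf _)⟩

theorem HasLogs.of_contractibleSpace [ContractibleSpace A] : HasLogs A := by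
  rw [hasLogs_iff_continuousMap]
  intro f hf
  obtain ⟨a, ⟨H⟩⟩ := id_nullhomotopic A
  let fH : C(unitInterval × A, {z : ℂ // z ≠ 0}) :=
    ⟨fun p ↦ ⟨f (H.symm p), hf _⟩, by fun_prop⟩
  have fH_zero : ∀ x, fH (0, x) = ⟨_, (Complex.log (f a)).exp_ne_zero⟩ := fun x ↦
    Subtype.ext (by simp [fH, Complex.exp_log (hf a)])
  let G := Complex.isCoveringMap_exp.liftHomotopy fH (.const A (Complex.log (f a))) fH_zero
  have hG : ∀ p, Complex.exp (G p) = fH p := fun p ↦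
    congrArg Subtype.val (congrFun (Complex.isCoveringMap_exp.liftHomotopy_lifts fH _ fH_zero) p)
  exact ⟨⟨fun x ↦ G (1, x), by fun_prop⟩, fun x ↦ by simp [hG, fH]⟩

theorem HasLogs.of_convex {E : Type*} [AddCommGroup E] [Module ℝ E] [TopologicalSpace E]
    [ContinuousAdd E] [ContinuousSMul ℝ E] {A : Set E} (hA : Convex ℝ A) : HasLogs A := by
  rcases A.eq_empty_or_nonempty with rfl | hne
  · exact fun f hf _ ↦ ⟨f, hf, by simp⟩
  · have := hA.contractibleSpace hne
    exact .of_contractibleSpace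

theorem exists_eqOn_add_of_exp_comp_eqOn (hA : IsPreconnected A) {g k : X → ℂ}
    (hg : ContinuousOn g A) (hk : ContinuousOn k A)
    (hgk : ∀ x ∈ A, Complex.exp (g x) = Complex.exp (k x)) :
    ∃ c, Complex.exp c = 1 ∧ EqOn g (fun x ↦ k x + c) A := by
  rcases A.eq_empty_or_nonempty with rfl | ⟨x₀, hx₀⟩
  · exact ⟨0, by simp⟩
  have hc : Complex.exp (g x₀ - k x₀) = 1 := by
    rw [Complex.exp_sub, hgk x₀ hx₀, div_self (Complex.exp_ne_zero _)]
  refine ⟨g x₀ - k x₀, hc, Complex.isCoveringMap_exp.eqOn_of_comp_eqOn hA hg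
    (hk.add continuousOn_const) (fun x hx ↦ Subtype.ext ?_) hx₀ (by ring)⟩
  simp [Complex.exp_add, hc, hgk x hx]

theorem continuousOn_union_inter_of_isClosed {Y : Type*} [TopologicalSpace Y] {f : X → Y}
    {C D U : Set X} (hC : IsClosed C) (hD : IsClosed D) (hfC : ContinuousOn f (C ∩ U))
    (hfD : ContinuousOn f (D ∩ U)) : ContinuousOn f ((C ∪ D) ∩ U) := by
  have within : ∀ {B : Set X}, IsClosed B → ContinuousOn f (B ∩ U) →
      ∀ x ∈ U, ContinuousWithinAt f (B ∩ U) x := by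
    intro B hB hf x hxU
    by_cases hxB : x ∈ B
    · exact hf x ⟨hxB, hxU⟩
    · exact continuousWithinAt_of_notMem_closure fun hx ↦
        hxB (closure_minimal inter_subset_left hB hx)
  rw [union_inter_distrib_right]
  rintro x (hx | hx) <;> exact (within hC hfC x hx.2).union (within hD hfD x hx.2)

theorem HasLogs.union_inter {C D U : Set X} (hC : IsClosed C) (hD : IsClosed D)
    (hCU : HasLogs (C ∩ U)) (hDU : HasLogs (D ∩ U)) (hCDU : IsPreconnected (C ∩ D ∩ U)) :
    HasLogs ((C ∪ D) ∩ U) := by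
  classical
  intro f hf hf0
  obtain ⟨g, hg, hgf⟩ := hCU f (hf.mono (by gcongr; exact subset_union_left))
    fun x hx ↦ hf0 x ⟨.inl hx.1, hx.2⟩
  obtain ⟨k, hk, hkf⟩ := hDU f (hf.mono (by gcongr; exact subset_union_right))
    fun x hx ↦ hf0 x ⟨.inr hx.1, hx.2⟩
  obtain ⟨c, hc, hgk⟩ : ∃ c, Complex.exp c = 1 ∧ EqOn g (fun x ↦ k x + c) (C ∩ D ∩ U) :=
    exists_eqOn_add_of_exp_comp_eqOn hCDU (hg.mono (by gcongr; exact inter_subset_left))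
      (hk.mono (by gcongr; exact inter_subset_right)) fun x hx ↦
        (hgf x ⟨hx.1.1, hx.2⟩).trans (hkf x ⟨hx.1.2, hx.2⟩).symm
  have eqOn_C : EqOn (C.piecewise g fun x ↦ k x + c) g (C ∩ U) :=
    (piecewise_eqOn C g _).mono inter_subset_left
  have eqOn_D : EqOn (C.piecewise g fun x ↦ k x + c) (fun x ↦ k x + c) (D ∩ U) := by
    rintro x ⟨hxD, hxU⟩
    by_cases hxC : x ∈ C
    · simpa [hxC] using hgk ⟨⟨hxC, hxD⟩, hxU⟩
    · simp [hxC]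
  refine ⟨C.piecewise g fun x ↦ k x + c, continuousOn_union_inter_of_isClosed hC hD
    (hg.congr eqOn_C) ((hk.add continuousOn_const).congr eqOn_D), ?_⟩
  rintro x ⟨hxC | hxD, hxU⟩
  · rw [eqOn_C ⟨hxC, hxU⟩, hgf x ⟨hxC, hxU⟩]
  · rw [eqOn_D ⟨hxD, hxU⟩, Complex.exp_add, hc, mul_one, hkf x ⟨hxD, hxU⟩]

end Logarithms

section PuncturedSurface

theorem not_exists_log_sub_center_on_sphere {c : ℂ} {r : ℝ} (hr : 0 < r) :
    ¬ ∃ k : C(Metric.sphere c r, ℂ), ∀ z, Complex.exp (k z) = z - c := by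
  rintro ⟨k, hk⟩
  let γ : ℝ → Metric.sphere c r := fun θ ↦ ⟨circleMap c r θ, circleMap_mem_sphere c hr.le θ⟩
  have hγ : Continuous γ := by fun_prop
  have exp_eq : ∀ θ ∈ univ,
      Complex.exp (k (γ θ)) = Complex.exp (Complex.log r + θ * Complex.I) := by
    intro θ _
    rw [hk, Complex.exp_add, Complex.exp_log (by exact_mod_cast hr.ne')]
    simp [γ, circleMap]
  obtain ⟨d, -, hd⟩ := exists_eqOn_add_of_exp_comp_eqOn isPreconnected_univ
    (k.continuous.comp hγ).continuousOn (by fun_prop) exp_eq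
  have closes_up : k (γ (2 * Real.pi)) = k (γ 0) :=
    congrArg k (Subtype.ext (by simpa using periodic_circleMap c r 0))
  have winding : (2 * Real.pi * Complex.I : ℂ) = 0 := by
    have h0 := hd (mem_univ 0)
    have h1 := hd (mem_univ (2 * Real.pi))
    push_cast [Function.comp_apply] at h0 h1
    linear_combination closes_up - h1 + h0
  exact Complex.two_pi_I_ne_zero winding

variable {X : Type*} [TopologicalSpace X] {M : Set X} {p : X}

theorem exists_nhds_not_hasLogs_punctured_of_chart (ψ : OpenPartialHomeomorph M ℂ) (hp : p ∈ M)
    (hpψ : ⟨p, hp⟩ ∈ ψ.source) :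
    ∃ W ∈ 𝓝 p, ∀ V ∈ 𝓝 p, V ⊆ W → ¬ HasLogs (M ∩ (V \ {p})) := by
  obtain ⟨W, hW, hWψ⟩ := mem_nhds_subtype _ _ _ |>.1 (ψ.open_source.mem_nhds hpψ)
  refine ⟨W, hW, fun V hV hVW hlogs ↦ ?_⟩
  set c := ψ ⟨p, hp⟩
  obtain ⟨r, hr, hball⟩ : ∃ r > 0, Metric.closedBall c r ⊆
      ψ.target ∩ {z | (ψ.symm z : X) ∈ V} := by
    refine Metric.nhds_basis_closedBall.mem_iff.1
      (Filter.inter_mem (ψ.open_target.mem_nhds (ψ.map_source hpψ)) ?_)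
    have hcont : ContinuousAt (fun z ↦ (ψ.symm z : X)) c :=
      continuous_subtype_val.continuousAt.comp (ψ.symm.continuousAt (ψ.map_source hpψ))
    exact hcont.preimage_mem_nhds (by simpa [c, ψ.left_inv hpψ] using hV)
  have mem_source : ∀ x : ↥(M ∩ (V \ {p})), ⟨x, x.2.1⟩ ∈ ψ.source := fun x ↦ hWψ (hVW x.2.2.1)
  let f : C(↥(M ∩ (V \ {p})), ℂ) :=
    ⟨fun x ↦ ψ ⟨x, x.2.1⟩ - c,
      (ψ.continuousOn.comp_continuous (by fun_prop) mem_source).sub continuous_const⟩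
  obtain ⟨g, hg⟩ := hasLogs_iff_continuousMap.1 hlogs f fun x hx ↦
    x.2.2.2 (congrArg Subtype.val (ψ.injOn (mem_source x) hpψ (sub_eq_zero.1 hx)))
  have mem_target : ∀ z : Metric.sphere c r, (z : ℂ) ∈ ψ.target := fun z ↦
    (hball (Metric.sphere_subset_closedBall z.2)).1
  have symm_mem : ∀ z : Metric.sphere c r, (ψ.symm z : X) ∈ M ∩ (V \ {p}) := by
    refine fun z ↦ ⟨(ψ.symm z).2, (hball (Metric.sphere_subset_closedBall z.2)).2, fun hz ↦ ?_⟩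
    have hzc : (z : ℂ) = c := by
      rw [← ψ.right_inv (mem_target z)]
      exact congrArg ψ (Subtype.ext hz)
    exact Metric.ne_of_mem_sphere z.2 hr.ne' hzc
  let σ : C(Metric.sphere c r, ↥(M ∩ (V \ {p}))) :=
    ⟨fun z ↦ ⟨ψ.symm z, symm_mem z⟩, (continuous_subtype_val.comp
      (ψ.symm.continuousOn.comp_continuous continuous_subtype_val mem_target)).subtype_mk _⟩
  refine not_exists_log_sub_center_on_sphere hr ⟨g.comp σ, fun z ↦ ?_⟩
  simp [hg, f, σ, ψ.right_inv (mem_target z)]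

theorem exists_nhds_not_hasLogs_punctured [ChartedSpace (EuclideanSpace ℝ (Fin 2)) M]
    (hp : p ∈ M) : ∃ W ∈ 𝓝 p, ∀ V ∈ 𝓝 p, V ⊆ W → ¬ HasLogs (M ∩ (V \ {p})) :=
  exists_nhds_not_hasLogs_punctured_of_chart
    ((chartAt (EuclideanSpace ℝ (Fin 2)) (⟨p, hp⟩ : M)).transHomeomorph
      Complex.orthonormalBasisOneI.repr.symm.toHomeomorph) hp (by simp)

end PuncturedSurface

section SimplicialComplex

theorem convexIndependent_of_affineIndependent {𝕜 E ι : Type*} [Field 𝕜] [LinearOrder 𝕜]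
    [IsStrictOrderedRing 𝕜] [AddCommGroup E] [Module 𝕜 E] {p : ι → E}
    (hp : AffineIndependent 𝕜 p) : ConvexIndependent 𝕜 p :=
  convexIndependent_iff_notMem_convexHull_sdiff.2 fun i t hi ↦
    hp.notMem_affineSpan_sdiff i t (convexHull_subset_affineSpan _ hi)

theorem pair_mem_faces {E : Type*} [AddCommGroup E] [Module ℝ E] [DecidableEq E]
    {K : SimplicialComplex ℝ E} {F : Finset E} {u v : E} (hF : F ∈ K.faces) (hu : u ∈ F)
    (hv : v ∈ F) : {u, v} ∈ K.faces :=
  K.down_closed hF (by simp [Finset.insert_subset_iff, hu, hv]) (Finset.insert_nonempty _ _)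

theorem exists_isGreatest_face {E : Type*} [AddCommGroup E] [Module ℝ E] [DecidableEq E]
    {K : SimplicialComplex ℝ E} {s u : E} (hsu : {s, u} ∈ K.faces) (c : E) :
    ∃ F, IsGreatest {G ∈ K.faces | {s, u} ⊆ G ∧ G ⊆ {s, u, c}} F := by
  by_cases hc : {s, u, c} ∈ K.faces
  · exact ⟨{s, u, c}, ⟨hc, by grind, subset_rfl⟩, fun G hG ↦ hG.2.2⟩
  · refine ⟨{s, u}, ⟨hsu, subset_rfl, by grind⟩, fun G ⟨hG, hsuG, hGc⟩ ↦ ?_⟩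
    have hcG : c ∉ G := fun hcG ↦ hc <| by
      rwa [hGc.antisymm (by grind)] at hG
    intro x hx
    grind

variable {E : Type*} [AddCommGroup E] [Module ℝ E] [TopologicalSpace E] [IsTopologicalAddGroup E]
  [ContinuousSMul ℝ E] [T2Space E] {K : SimplicialComplex ℝ E} {F F₁ F₂ C : Finset E} {s : E}

theorem eventually_mem_of_mem_convexHull_face
    (hK : LocallyFinite fun F : K.faces ↦ convexHull ℝ ((F : Finset E) : Set E))
    (hs : s ∈ K.vertices) : ∀ᶠ x in 𝓝 s, ∀ F ∈ K.faces, x ∈ convexHull ℝ (F : Set E) → s ∈ F := by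
  let T : Set K.faces := {F | s ∉ (F : Finset E)}
  have hclosed : IsClosed (⋃ F : T, convexHull ℝ ((F.1 : Finset E) : Set E)) :=
    (hK.comp_injective Subtype.val_injective).isClosed_iUnion fun F ↦
      F.1.1.finite_toSet.isClosed_convexHull ℝ
  have hsT : s ∉ ⋃ F : T, convexHull ℝ ((F.1 : Finset E) : Set E) := by
    simp only [mem_iUnion, not_exists]
    exact fun F hF ↦ F.2 ((SimplicialComplex.vertex_mem_convexHull_iff hs F.1.2).1 hF)
  filter_upwards [hclosed.isOpen_compl.mem_nhds hsT] with x hx F hF hxF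
  by_contra hsF
  exact hx (mem_iUnion.2 ⟨⟨⟨F, hF⟩, hsF⟩, hxF⟩)

variable [LocallyConvexSpace ℝ E]

theorem mem_extremePoints_convexHull {A : Set E} (hA : A.Finite) {x : E} (hx : x ∈ A)
    (hxA : x ∉ convexHull ℝ (A \ {x})) : x ∈ (convexHull ℝ A).extremePoints ℝ := by
  by_contra hext
  refine hxA ?_
  have hsub : (convexHull ℝ A).extremePoints ℝ ⊆ A \ {x} := fun y hy ↦
    ⟨extremePoints_convexHull_subset hy, fun hyx ↦ hext (hyx ▸ hy)⟩
  rw [← (hA.sdiff.isClosed_convexHull ℝ).closure_eq]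
  apply closure_mono (convexHull_mono hsub)
  rw [closure_convexHull_extremePoints (hA.isCompact_convexHull ℝ) (convex_convexHull ℝ A)]
  exact subset_convexHull ℝ A hx

theorem convex_convexHull_face_sdiff_vertex (hF : F ∈ K.faces) (hs : s ∈ F) :
    Convex ℝ (convexHull ℝ (F : Set E) \ {s}) := by
  refine ((convex_convexHull ℝ _).mem_extremePoints_iff_convex_sdiff.1
    (mem_extremePoints_convexHull F.finite_toSet hs ?_)).2
  exact convexIndependent_set_iff_notMem_convexHull_sdiff.1
    (convexIndependent_of_affineIndependent (K.indep hF)) s hs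

theorem convex_convexHull_face_inter_punctured {V : Set E} (hV : Convex ℝ V) (hF : F ∈ K.faces)
    (hs : s ∈ F) : Convex ℝ (convexHull ℝ (F : Set E) ∩ (V \ {s})) := by
  rw [← inter_sdiff_assoc, inter_sdiff_right_comm]
  exact (convex_convexHull_face_sdiff_vertex hF hs).inter hV

theorem isPreconnected_convexHull_inter_convexHull_inter_punctured {V : Set E} (hV : Convex ℝ V)
    (h₁ : F₁ ∈ K.faces) (h₂ : F₂ ∈ K.faces) (s₁ : s ∈ F₁) (s₂ : s ∈ F₂) :
    IsPreconnected (convexHull ℝ (F₁ : Set E) ∩ convexHull ℝ F₂ ∩ (V \ {s})) := by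
  rw [inter_inter_distrib_right]
  exact ((convex_convexHull_face_inter_punctured hV h₁ s₁).inter
    (convex_convexHull_face_inter_punctured hV h₂ s₂)).isPreconnected

theorem HasLogs.of_path_of_faces {V : Set E} (hV : Convex ℝ V) (h₁ : F₁ ∈ K.faces)
    (hC : C ∈ K.faces) (h₂ : F₂ ∈ K.faces) (s₁ : s ∈ F₁) (sC : s ∈ C) (s₂ : s ∈ F₂)
    (h₁₂ : (F₁ ∩ F₂ : Set E) ⊆ C) :
    HasLogs ((convexHull ℝ (F₁ : Set E) ∪ convexHull ℝ C ∪ convexHull ℝ F₂) ∩ (V \ {s})) := by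
  have hasLogs_face {F : Finset E} (hF : F ∈ K.faces) (sF : s ∈ F) :
      HasLogs (convexHull ℝ (F : Set E) ∩ (V \ {s})) :=
    .of_convex (convex_convexHull_face_inter_punctured hV hF sF)
  have hinter : (convexHull ℝ (F₁ : Set E) ∪ convexHull ℝ C) ∩ convexHull ℝ F₂ =
      convexHull ℝ (C : Set E) ∩ convexHull ℝ F₂ := by
    rw [union_inter_distrib_right, union_eq_right]
    refine subset_inter ?_ inter_subset_right
    exact (K.inter_subset_convexHull h₁ h₂).trans (convexHull_mono h₁₂)
  have isClosed_face (F : Finset E) : IsClosed (convexHull ℝ (F : Set E)) :=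
    F.finite_toSet.isClosed_convexHull ℝ
  refine .union_inter ((isClosed_face F₁).union (isClosed_face C)) (isClosed_face F₂)
    (.union_inter (isClosed_face F₁) (isClosed_face C) (hasLogs_face h₁ s₁) (hasLogs_face hC sC) ?_)
    (hasLogs_face h₂ s₂) ?_
  · exact isPreconnected_convexHull_inter_convexHull_inter_punctured hV h₁ hC s₁ sC
  · rw [hinter]
    exact isPreconnected_convexHull_inter_convexHull_inter_punctured hV hC h₂ sC s₂

theorem exists_face_not_subset_of_path_of_faces [ChartedSpace (EuclideanSpace ℝ (Fin 2)) K.space]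
    (hK : LocallyFinite fun F : K.faces ↦ convexHull ℝ ((F : Finset E) : Set E))
    (h₁ : F₁ ∈ K.faces) (hC : C ∈ K.faces) (h₂ : F₂ ∈ K.faces) (s₁ : s ∈ F₁) (sC : s ∈ C)
    (s₂ : s ∈ F₂) (h₁₂ : (F₁ ∩ F₂ : Set E) ⊆ C) :
    ∃ G ∈ K.faces, s ∈ G ∧ ¬ G ⊆ F₁ ∧ ¬ G ⊆ C ∧ ¬ G ⊆ F₂ := by
  by_contra! hcover
  have hs : s ∈ K.vertices := K.down_closed h₁ (by simpa using s₁) (by simp)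
  obtain ⟨W, hW, hWlogs⟩ :=
    exists_nhds_not_hasLogs_punctured (SimplicialComplex.vertices_subset_space hs)
  obtain ⟨V, hV, hVconv, hVsub⟩ :=
    (locallyConvexSpace_iff_exists_convex_subset ℝ E).1 inferInstance s _
      (Filter.inter_mem hW (eventually_mem_of_mem_convexHull_face hK hs))
  refine hWlogs V hV (hVsub.trans inter_subset_left) ?_
  convert HasLogs.of_path_of_faces hVconv h₁ hC h₂ s₁ sC s₂ h₁₂ using 1
  apply Subset.antisymm
  · rintro x ⟨hx, hxV⟩
    obtain ⟨G, hG, hxG⟩ := SimplicialComplex.mem_space_iff.1 hx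
    have hG' := hcover G hG ((hVsub hxV.1).2 G hG hxG)
    refine ⟨?_, hxV⟩
    by_cases hG₁ : G ⊆ F₁
    · exact .inl (.inl (convexHull_mono hG₁ hxG))
    by_cases hGC : G ⊆ C
    · exact .inl (.inr (convexHull_mono hGC hxG))
    · exact .inr (convexHull_mono (hG' hG₁ hGC) hxG)
  · gcongr
    simp [SimplicialComplex.convexHull_subset_space, h₁, hC, h₂]

theorem triangle_mem_faces_of_link_subset [DecidableEq E]
    [ChartedSpace (EuclideanSpace ℝ (Fin 2)) K.space]
    (hK : LocallyFinite fun F : K.faces ↦ convexHull ℝ ((F : Finset E) : Set E)) {a b c : E}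
    (ha : {s, a} ∈ K.faces) (hb : {s, b} ∈ K.faces) (hc : {s, c} ∈ K.faces) (hab : a ≠ b)
    (hlink : ∀ v, {s, v} ∈ K.faces → v ∈ ({s, a, b, c} : Finset E)) :
    {s, a, b} ∈ K.faces := by
  obtain ⟨F₁, ⟨h₁, haF₁, hF₁c⟩, F₁_max⟩ := exists_isGreatest_face ha c
  obtain ⟨F₂, ⟨h₂, hbF₂, hF₂c⟩, F₂_max⟩ := exists_isGreatest_face hb c
  have hF₁₂ : (F₁ ∩ F₂ : Set E) ⊆ ({s, c} : Finset E) := by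
    refine (inter_subset_inter (Finset.coe_subset.2 hF₁c) (Finset.coe_subset.2 hF₂c)).trans ?_
    rw [← Finset.coe_inter, Finset.coe_subset]
    grind
  obtain ⟨G, hG, hsG, hG₁, hGc, hG₂⟩ := exists_face_not_subset_of_path_of_faces hK h₁ hc h₂
    (s := s) (haF₁ (by simp)) (by simp) (hbF₂ (by simp)) hF₁₂
  have hG_sac : {s, a} ⊆ G → ¬ G ⊆ {s, a, c} := fun h h' ↦ hG₁ (F₁_max ⟨hG, h, h'⟩)
  have hG_sbc : {s, b} ⊆ G → ¬ G ⊆ {s, b, c} := fun h h' ↦ hG₂ (F₂_max ⟨hG, h, h'⟩)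
  have hG_vertices : G ⊆ {s, a, b, c} := fun v hv ↦ hlink v (pair_mem_faces hG hsG hv)
  have habG : a ∈ G ∧ b ∈ G := by
    clear F₁_max F₂_max hlink
    grind
  exact K.down_closed hG (by simp [Finset.insert_subset_iff, hsG, habG]) (by simp)

end SimplicialComplex

namespace CoxOrb

variable {L : SimplicialComplex ℝ E3} {m : E3 → E3 → ℕ} {s u v : E3}

/-- Every 2-simplex of `L` is spherical for the labeling `m`: its angle sum
`π/m_st + π/m_tu + π/m_us` exceeds `π`. This is one half of `MetricFlag`. -/
def HasSphericalTriangles (L : SimplicialComplex ℝ E3) (m : E3 → E3 → ℕ) : Prop :=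
  ∀ s t u : E3, s ≠ t → t ≠ u → s ≠ u → {s, t, u} ∈ L.faces →
    1 / (m s t : ℝ) + 1 / (m t u : ℝ) + 1 / (m u s : ℝ) > 1

theorem MetricFlag.hasSphericalTriangles (hflag : MetricFlag L m) : HasSphericalTriangles L m :=
  fun s t u hst htu hsu hface ↦ (hflag s t u hst htu hsu (pair_mem_faces hface (by simp) (by simp))
    (pair_mem_faces hface (by simp) (by simp)) (pair_mem_faces hface (by simp) (by simp))).1 hface

namespace IsThreeEuclidean

theorem exists_linkVerts_eq (hs : IsThreeEuclidean L m s) (hu : u ∈ linkVerts L s) :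
    ∃ v w, u ≠ v ∧ v ≠ w ∧ u ≠ w ∧ linkVerts L s = {u, v, w} := by
  obtain ⟨-, a, b, c, hab, hbc, hac, hlink, -⟩ := hs
  rw [hlink] at hu ⊢
  rcases hu with rfl | rfl | rfl
  · exact ⟨b, c, hab, hbc, hac, rfl⟩
  · exact ⟨a, c, hab.symm, hac, hbc, insert_comm _ _ _⟩
  · exact ⟨a, b, hac.symm, hab, hbc.symm, by grind⟩

theorem notMem_faces_of_subset_linkVerts (hm : HasSphericalTriangles L m)
    (hs : IsThreeEuclidean L m s) {F : Finset E3} (hF : F.card = 3)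
    (hFs : (F : Set E3) ⊆ linkVerts L s) : F ∉ L.faces := by
  obtain ⟨-, a, b, c, hab, hbc, hac, hlink, hsum⟩ := hs
  have hF_eq : F = {a, b, c} := by
    refine Finset.eq_of_subset_of_card_le (fun x hx ↦ ?_) (Finset.card_le_three.trans hF.ge)
    simpa [hlink] using hFs hx
  intro hFL
  exact (hm a b c hab hbc hac (hF_eq ▸ hFL)).ne' hsum

theorem mem_of_mem_star (hm : HasSphericalTriangles L m) (hs : IsThreeEuclidean L m s)
    {F : Finset E3} (hF : F.card = 3) (hFs : F ∈ CoxOrb.star L s) : s ∈ F := by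
  obtain ⟨hFL, G, hG, hsG, hFG⟩ := hFs
  by_contra hsF
  exact hs.notMem_faces_of_subset_linkVerts hm hF
    (fun x hx ↦ ⟨fun hxs ↦ hsF (hxs ▸ hx), pair_mem_faces hG hsG (hFG hx)⟩) hFL

variable [ChartedSpace (EuclideanSpace ℝ (Fin 2)) L.space]

theorem triangle_mem_faces
    (hL : LocallyFinite fun F : L.faces ↦ convexHull ℝ ((F : Finset E3) : Set E3))
    (hs : IsThreeEuclidean L m s) (hu : u ∈ linkVerts L s) (hv : v ∈ linkVerts L s)
    (huv : u ≠ v) : {s, u, v} ∈ L.faces := by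
  obtain ⟨w, hw, hlink⟩ : ∃ w ∈ linkVerts L s, linkVerts L s ⊆ {u, v, w} := by
    obtain ⟨a, b, -, -, -, hlink⟩ := hs.exists_linkVerts_eq hu
    rw [hlink] at hv ⊢
    rcases hv with rfl | rfl | rfl
    · exact absurd rfl huv
    · exact ⟨b, by simp⟩
    · exact ⟨a, by simp, by grind⟩
  refine triangle_mem_faces_of_link_subset hL hu.2 hv.2 hw.2 huv fun x hx ↦ ?_
  by_cases hxs : x = s
  · simp [hxs]
  · simpa [hxs] using hlink ⟨hxs, hx⟩

theorem pair_notMem_faces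
    (hL : LocallyFinite fun F : L.faces ↦ convexHull ℝ ((F : Finset E3) : Set E3))
    (hm : HasSphericalTriangles L m) {s' : E3} (hs : IsThreeEuclidean L m s)
    (hs' : IsThreeEuclidean L m s') (hne : s ≠ s') : {s, s'} ∉ L.faces := by
  intro hedge
  have hs's : s' ∈ linkVerts L s := ⟨hne.symm, hedge⟩
  obtain ⟨a, b, hs'a, hab, hs'b, hlink⟩ := hs.exists_linkVerts_eq hs's
  have mem_link_s' {v : E3} (hv : v ∈ linkVerts L s) (hs'v : s' ≠ v) : v ∈ linkVerts L s' :=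
    ⟨hs'v.symm, pair_mem_faces (hs.triangle_mem_faces hL hs's hv hs'v) (by simp) (by simp)⟩
  have htriangle : {s', a, b} ∈ L.faces :=
    hs'.triangle_mem_faces hL (mem_link_s' (by simp [hlink]) hs'a)
      (mem_link_s' (by simp [hlink]) hs'b) hab
  exact hs.notMem_faces_of_subset_linkVerts hm
    (Finset.card_eq_three.2 ⟨s', a, b, hs'a, hs'b, hab, rfl⟩) (by simp [hlink]) htriangle

end IsThreeEuclidean

end CoxOrb

theorem threeEuclidean_not_adjacent_general
    (L : SimplicialComplex ℝ E3) (m : E3 → E3 → ℕ)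
    [ChartedSpace (EuclideanSpace ℝ (Fin 2)) L.space]
    (hL : LocallyFinite fun F : L.faces ↦ convexHull ℝ ((F : Finset E3) : Set E3))
    (hm : HasSphericalTriangles L m) :
    (∀ s s' : E3, IsThreeEuclidean L m s → IsThreeEuclidean L m s' → s ≠ s' →
      ({s, s'} : Finset E3) ∉ L.faces) ∧
    (∀ s s' : E3, IsThreeEuclidean L m s → IsThreeEuclidean L m s' → s ≠ s' →
      ∀ F ∈ L.faces, F.card = 3 → ¬ (F ∈ star L s ∧ F ∈ star L s')) := by
  refine ⟨fun s s' hs hs' hne ↦ hs.pair_notMem_faces hL hm hs' hne, ?_⟩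
  rintro s s' hs hs' hne F hF hcard ⟨hFs, hFs'⟩
  exact hs.pair_notMem_faces hL hm hs' hne
    (pair_mem_faces hF (hs.mem_of_mem_star hm hcard hFs) (hs'.mem_of_mem_star hm hcard hFs'))

/-- In a metric flag labeled triangulation of the 2-sphere, no two 3-Euclidean
vertices are joined by an edge; consequently, the closed stars of two distinct
3-Euclidean vertices have no 2-simplex of `L` in common. -/
theorem threeEuclidean_not_adjacent
    (L : SimplicialComplex ℝ E3) (m : E3 → E3 → ℕ)
    (hL : IsLabeledS2 L m) (hflag : MetricFlag L m) :
    (∀ s s' : E3, IsThreeEuclidean L m s → IsThreeEuclidean L m s' → s ≠ s' →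
      ({s, s'} : Finset E3) ∉ L.faces) ∧
    (∀ s s' : E3, IsThreeEuclidean L m s → IsThreeEuclidean L m s' → s ≠ s' →
      ∀ F ∈ L.faces, F.card = 3 → ¬ (F ∈ star L s ∧ F ∈ star L s')) := by
  obtain ⟨φ⟩ := hL.sphere
  have : Fact (Module.finrank ℝ E3 = 2 + 1) := ⟨by simp⟩
  have : ChartedSpace (EuclideanSpace ℝ (Fin 2)) L.space := φ.symm.chartedSpace
  have : Finite L.faces := hL.finite
  exact threeEuclidean_not_adjacent_general L m (locallyFinite_of_finite _)
    hflag.hasSphericalTriangles
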